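/- Let G be an abelian group, let θ = ({X_t}_{t∈G}, {h_t}_{t∈G}) be a partial action of G on a nonempty set X, let K be a field, let α be the induced partial action of G on F₀(X), and let R = F₀(X) ⋆_α G. Then R is simple (its only two-sided ideals are {0} and R) if and only if θ is minimal and free. -/

import Mathlib

/-- A partial action `θ = ({X_t}, {h_t})` of a group `G` on a set `X`: subsets
`Xt t ⊆ X` and bijections `h t : Xt t⁻¹ → Xt t` (encoded as globally defined maps
whose values only matter on `Xt t⁻¹`). -/
structure SetPartialAction (G : Type*) [Group G] (X : Type*) where
  Xt : G → Set X
  h : G → X → X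
  h_mem : ∀ t, ∀ x ∈ Xt t⁻¹, h t x ∈ Xt t
  Xt_one : Xt 1 = Set.univ
  h_one : ∀ x, h 1 x = x
  h_left_inv : ∀ t, ∀ x ∈ Xt t⁻¹, h t⁻¹ (h t x) = x
  h_image : ∀ t s, h t '' (Xt t⁻¹ ∩ Xt s) = Xt t ∩ Xt (t * s)
  h_comp : ∀ t s, ∀ x ∈ Xt s⁻¹, x ∈ Xt (s⁻¹ * t⁻¹) → h t (h s x) = h (t * s) x

namespace SetPartialAction

variable {G : Type*} [Group G] {X : Type*}

/-- A subset `V ⊆ X` is `G`-invariant if `h t (V ∩ Xt t⁻¹) ⊆ V` for all `t`. -/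
def Invariant (θ : SetPartialAction G X) (V : Set X) : Prop :=
  ∀ t : G, θ.h t '' (V ∩ θ.Xt t⁻¹) ⊆ V

/-- `θ` is minimal if `∅` and `X` are the only `G`-invariant subsets of `X`. -/
def Minimal (θ : SetPartialAction G X) : Prop :=
  ∀ V : Set X, θ.Invariant V → V = ∅ ∨ V = Set.univ

/-- `θ` is free if `h t x = x` for some `x ∈ Xt t⁻¹` implies `t = 1`. -/
def Free (θ : SetPartialAction G X) : Prop :=
  ∀ t : G, ∀ x ∈ θ.Xt t⁻¹, θ.h t x = x → t = 1

end SetPartialAction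
section F0

variable {G : Type*} [Group G] {X : Type*} {K : Type*} [Field K]

/-- `F₀(V)`: the finitely supported functions `X → K` vanishing off `V`,
as a subset of `F₀(X) = X →₀ K`. -/
def F0 (K : Type*) [Field K] {X : Type*} (V : Set X) : Set (X →₀ K) :=
  {f : X →₀ K | ∀ x ∉ V, f x = 0}

/-- `I` is a (two-sided) ring ideal of `F₀(X)`. -/
def IsIdealF0 {X : Type*} (K : Type*) [Field K] (I : Set (X →₀ K)) : Prop :=
  (0 : X →₀ K) ∈ I ∧ (∀ f ∈ I, ∀ g ∈ I, f + g ∈ I) ∧ (∀ f ∈ I, -f ∈ I) ∧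
    (∀ f ∈ I, ∀ g : X →₀ K, f * g ∈ I ∧ g * f ∈ I)

open Classical in
/-- The induced map `α t : F₀(X) → F₀(X)`, `α t f = f ∘ h t⁻¹` on `Xt t`,
extended by zero off `Xt t`. -/
noncomputable def amap (θ : SetPartialAction G X) (K : Type*) [Field K] (t : G)
    (f : X →₀ K) : X →₀ K :=
  Finsupp.onFinset (f.support.image (θ.h t))
    (fun x => if x ∈ θ.Xt t then f (θ.h t⁻¹ x) else 0)
    (by
      intro x hx
      by_cases hxt : x ∈ θ.Xt t
      · simp only [hxt, if_true] at hx
        have hmem : θ.h t⁻¹ x ∈ f.support := Finsupp.mem_support_iff.mpr hx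
        refine Finset.mem_image.mpr ⟨θ.h t⁻¹ x, hmem, ?_⟩
        have := θ.h_left_inv t⁻¹ x (by simpa using hxt)
        simpa using this
      · simp [hxt] at hx)

/-- `I ⊆ F₀(X)` is `G`-invariant: `α t (I ∩ D t⁻¹) ⊆ I ∩ D t`. -/
def GInvariantF0 (θ : SetPartialAction G X) (K : Type*) [Field K]
    (I : Set (X →₀ K)) : Prop :=
  ∀ t : G, ∀ f ∈ I, f ∈ F0 K (θ.Xt t⁻¹) →
    amap θ K t f ∈ I ∧ amap θ K t f ∈ F0 K (θ.Xt t)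

end F0
section FSkew

variable {G : Type*} [Group G] {X : Type*}

/-- The ideal `D t = F₀(X_t)` of `F₀(X)`, as an additive subgroup. -/
def Dsub (θ : SetPartialAction G X) (K : Type*) [Field K] (t : G) :
    AddSubgroup (X →₀ K) where
  carrier := F0 K (θ.Xt t)
  zero_mem' := by intro x _; simp
  add_mem' := by intro f g hf hg x hx; simp [hf x hx, hg x hx]
  neg_mem' := by intro f hf x hx; simp [hf x hx]

variable (K : Type*) [Field K]

/-- The underlying additive group of the partial skew group ring `F₀(X) ⋆_α G`. -/
abbrev SkewF0 (θ : SetPartialAction G X) (K : Type*) [Field K] : Type _ :=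
  Π₀ t : G, ↥(Dsub θ K t)

/-- The element `f δ_t` for `f ∈ D t`. -/
noncomputable def deltaF [DecidableEq G] (θ : SetPartialAction G X) (t : G)
    (f : X →₀ K) (hf : f ∈ Dsub θ K t) : SkewF0 θ K :=
  DFinsupp.single t ⟨f, hf⟩

/-- The element `f δ_0` for arbitrary `f ∈ F₀(X) = D 1`. -/
noncomputable def deltaF0 [DecidableEq G] (θ : SetPartialAction G X) (f : X →₀ K) :
    SkewF0 θ K :=
  deltaF K θ 1 f (by intro x hx; rw [θ.Xt_one] at hx; exact absurd (Set.mem_univ x) hx)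

/-- The characteristic function `χ_A ∈ F₀(X)` of a finite set `A ⊆ X`. -/
noncomputable def chi (A : Finset X) : X →₀ K := Finsupp.indicator A fun _ _ => (1 : K)

/-- The multiplication of `F₀(X) ⋆_α G`, *assumed* to exist, to be biadditive,
associative and to satisfy `(f δ_t)(g δ_s) = α_t(α_{t⁻¹}(f) g) δ_{ts}`. -/
structure FSkewMul [DecidableEq G] (θ : SetPartialAction G X) (K : Type*) [Field K] where
  mul : SkewF0 θ K → SkewF0 θ K → SkewF0 θ K
  left_distrib : ∀ x y z, mul x (y + z) = mul x y + mul x z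
  right_distrib : ∀ x y z, mul (x + y) z = mul x z + mul y z
  mul_single : ∀ (t s : G) (a : X →₀ K) (ha : a ∈ Dsub θ K t)
      (b : X →₀ K) (hb : b ∈ Dsub θ K s) (g : G),
    ((mul (deltaF K θ t a ha) (deltaF K θ s b hb)) g : X →₀ K) =
      if g = t * s then amap θ K t (amap θ K t⁻¹ a * b) else 0
  assoc : ∀ x y z, mul (mul x y) z = mul x (mul y z)

variable [DecidableEq G] {θ : SetPartialAction G X}

/-- `J` is a two-sided ideal of the partial skew group ring `F₀(X) ⋆_α G`. -/
def IsSkewIdealF0 (S : FSkewMul θ K) (J : Set (SkewF0 θ K)) : Prop :=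
  (0 : SkewF0 θ K) ∈ J ∧ (∀ x ∈ J, ∀ y ∈ J, x + y ∈ J) ∧ (∀ x ∈ J, -x ∈ J) ∧
    (∀ x ∈ J, ∀ y : SkewF0 θ K, S.mul x y ∈ J ∧ S.mul y x ∈ J)

/-- The corner `x R x` of the partial skew group ring. -/
def cornerF (S : FSkewMul θ K) (x : SkewF0 θ K) : Set (SkewF0 θ K) :=
  {y | ∃ z, y = S.mul x (S.mul z x)}

/-- `C_e` for `e = χ_A`: the center of the corner `eδ_0 R eδ_0`. -/
def CeF (S : FSkewMul θ K) (A : Finset X) : Set (SkewF0 θ K) :=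
  {x ∈ cornerF K S (deltaF0 K θ (chi K A)) |
    ∀ y ∈ cornerF K S (deltaF0 K θ (chi K A)), S.mul x y = S.mul y x}

end FSkew

section Helpers

variable {G : Type*} [Group G] [DecidableEq G] {X : Type*} {θ : SetPartialAction G X}
  {K : Type*} [Field K]

theorem aux_zero_mul (S : FSkewMul θ K) (y : SkewF0 θ K) : S.mul 0 y = 0 := by
  have := S.right_distrib 0 0 y
  simpa using this

theorem aux_mul_zero (S : FSkewMul θ K) (y : SkewF0 θ K) : S.mul y 0 = 0 := by
  have := S.left_distrib y 0 0
  simpa using this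

theorem aux_prod_apply (t : G) (a b : X →₀ K) (ha : a ∈ Dsub θ K t) (p : X) :
    amap θ K t (amap θ K t⁻¹ a * b) p = a p * b (θ.h t⁻¹ p) := by
  by_cases hp : p ∈ θ.Xt t
  · have h1 : θ.h t⁻¹ p ∈ θ.Xt t⁻¹ := θ.h_mem t⁻¹ p (by simpa using hp)
    have h2 := θ.h_left_inv t⁻¹ p (by simpa using hp)
    rw [inv_inv] at h2
    simp [amap, hp, h1, h2]
  · have : a p = 0 := ha p hp
    simp [amap, hp, this]

theorem aux_mul_delta (S : FSkewMul θ K) (t s : G) (a b : X →₀ K) (ha : a ∈ Dsub θ K t)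
    (hb : b ∈ Dsub θ K s) : ∃ (c : X →₀ K) (hc : c ∈ Dsub θ K (t * s)),
    S.mul (deltaF K θ t a ha) (deltaF K θ s b hb) = deltaF K θ (t * s) c hc ∧
    ∀ p, c p = a p * b (θ.h t⁻¹ p) := by
  have h := S.mul_single t s a ha b hb
  have hm : amap θ K t (amap θ K t⁻¹ a * b) ∈ Dsub θ K (t * s) := by
    have := h (t * s)
    rw [if_pos rfl] at this
    rw [← this]
    exact Subtype.property _
  refine ⟨_, hm, ?_, fun p => aux_prod_apply t a b ha p⟩
  ext1 g
  apply Subtype.ext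
  rw [h g]
  unfold deltaF
  by_cases hg : g = t * s
  · subst hg
    simp
  · rw [if_neg hg, DFinsupp.single_eq_of_ne hg]
    rfl

theorem aux_mem_single (θ : SetPartialAction G X) (K : Type*) [Field K] {t : G} {x : X}
    (hx : x ∈ θ.Xt t) (c : K) : Finsupp.single x c ∈ Dsub θ K t := by
  intro p hp
  rw [Finsupp.single_eq_of_ne]
  rintro rfl
  exact hp hx

/-- The element `c χ_x δ_t`. -/
noncomputable def auxE (θ : SetPartialAction G X) (K : Type*) [Field K] (t : G) (x : X)
    (hx : x ∈ θ.Xt t) (c : K) : SkewF0 θ K :=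
  deltaF K θ t (Finsupp.single x c) (aux_mem_single θ K hx c)

theorem auxE_congr {t s : G} (h : t = s) (x : X) (hx : x ∈ θ.Xt t) (hx' : x ∈ θ.Xt s) (c : K) :
    auxE θ K t x hx c = auxE θ K s x hx' c := by
  subst h; rfl

theorem aux_delta_congr {t s : G} (h : t = s) {a b : X →₀ K} (hab : a = b)
    (ha : a ∈ Dsub θ K t) (hb : b ∈ Dsub θ K s) :
    deltaF K θ t a ha = deltaF K θ s b hb := by
  subst h; subst hab; rfl

theorem auxE_mul (S : FSkewMul θ K) {t s g : G} {x y : X} (hx : x ∈ θ.Xt t) (hy : y ∈ θ.Xt s)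
    (hg : t * s = g) (hxg : x ∈ θ.Xt g) (hxy : θ.h t⁻¹ x = y) (c d : K) :
    S.mul (auxE θ K t x hx c) (auxE θ K s y hy d) = auxE θ K g x hxg (c * d) := by
  obtain ⟨e, he, h1, h2⟩ := aux_mul_delta S t s _ _ (aux_mem_single θ K hx c)
    (aux_mem_single θ K hy d)
  unfold auxE
  rw [h1]
  apply aux_delta_congr hg
  ext p
  rw [h2]
  by_cases hp : p = x
  · subst hp; simp [hxy]
  · simp [Finsupp.single_eq_of_ne hp]

/-- The natural representation. -/
noncomputable def auxPhi (θ : SetPartialAction G X) (K : Type*) [Field K] (f : X → K) (x : X) :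
    SkewF0 θ K →+ K :=
  DFinsupp.sumAddHom fun g =>
    { toFun := fun a => (a : X →₀ K) x * f (θ.h g⁻¹ x)
      map_zero' := by simp
      map_add' := by intro a b; simp [add_mul] }

theorem auxPhi_delta (f : X → K) (x : X) (t : G) (a : X →₀ K) (ha : a ∈ Dsub θ K t) :
    auxPhi θ K f x (deltaF K θ t a ha) = a x * f (θ.h t⁻¹ x) := by
  simp [auxPhi, deltaF]

theorem aux_induction {P : SkewF0 θ K → Prop} (r : SkewF0 θ K) (h0 : P 0)
    (hadd : ∀ x y, P x → P y → P (x + y))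
    (hd : ∀ t a ha, P (deltaF K θ t a ha)) : P r := by
  refine DFinsupp.induction r h0 ?_
  intro i b f _ _ hf
  exact hadd _ _ (hd i b.1 b.2) hf

theorem auxPhi_mul (S : FSkewMul θ K) (f : X → K) (x : X) (r s : SkewF0 θ K) :
    auxPhi θ K f x (S.mul r s) = auxPhi θ K (fun y => auxPhi θ K f y s) x r := by
  refine aux_induction (P := fun r => auxPhi θ K f x (S.mul r s) =
    auxPhi θ K (fun y => auxPhi θ K f y s) x r) r ?_ ?_ ?_
  · simp [aux_zero_mul]
  · intro r1 r2 h1 h2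
    rw [S.right_distrib, map_add, map_add, h1, h2]
  · intro t a ha
    rw [auxPhi_delta]
    refine aux_induction (P := fun s => auxPhi θ K f x (S.mul (deltaF K θ t a ha) s) =
      a x * auxPhi θ K f (θ.h t⁻¹ x) s) s ?_ ?_ ?_
    · simp [aux_mul_zero]
    · intro r1 r2 h1 h2
      rw [S.left_distrib, map_add, map_add, h1, h2, mul_add]
    · intro s b hb
      obtain ⟨c, hc, h1, h2⟩ := aux_mul_delta S t s a b ha hb
      rw [h1, auxPhi_delta, auxPhi_delta, h2, mul_assoc]
      by_cases hx : x ∈ θ.Xt t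
      · by_cases hy : θ.h t⁻¹ x ∈ θ.Xt s
        · have h3 : θ.h t⁻¹ x ∈ θ.Xt t⁻¹ := θ.h_mem t⁻¹ x (by simpa using hx)
          have h4 : θ.h t (θ.h t⁻¹ x) = x := by
            simpa using θ.h_left_inv t⁻¹ x (by simpa using hx)
          have h5 : x ∈ θ.Xt t ∩ θ.Xt (t * s) := by
            rw [← θ.h_image]
            exact ⟨_, ⟨h3, hy⟩, h4⟩
          have h6 := θ.h_comp s⁻¹ t⁻¹ x (by simpa using hx) (by simpa using h5.2)
          rw [h6, mul_inv_rev]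
        · have : b (θ.h t⁻¹ x) = 0 := hb _ hy
          simp [this]
      · have : a x = 0 := ha _ hx
        simp [this]

theorem auxPhi_off {V : Set X} (hV : θ.Invariant V) (F : X → K) (hF : ∀ y ∉ V, F y = 0)
    (x : X) (hx : x ∉ V) (r : SkewF0 θ K) : auxPhi θ K F x r = 0 := by
  refine aux_induction (P := fun r => auxPhi θ K F x r = 0) r (by simp) ?_ ?_
  · intro r1 r2 h1 h2
    rw [map_add, h1, h2, add_zero]
  · intro t a ha
    rw [auxPhi_delta]
    by_cases hxt : x ∈ θ.Xt t
    · have h3 : θ.h t⁻¹ x ∈ θ.Xt t⁻¹ := θ.h_mem t⁻¹ x (by simpa using hxt)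
      have h4 : θ.h t (θ.h t⁻¹ x) = x := by
        simpa using θ.h_left_inv t⁻¹ x (by simpa using hxt)
      rw [hF, mul_zero]
      intro hy
      exact hx (hV t ⟨_, ⟨hy, h3⟩, h4⟩)
    · have : a x = 0 := ha _ hxt
      simp [this]

theorem aux_ideal (S : FSkewMul θ K) {V : Set X} (hV : θ.Invariant V) :
    IsSkewIdealF0 K S {r | ∀ f : X → K, ∀ x ∉ V, auxPhi θ K f x r = 0} := by
  refine ⟨?_, ?_, ?_, ?_⟩
  · intro f x _
    simp
  · intro r hr s hs f x hx
    rw [map_add, hr f x hx, hs f x hx, add_zero]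
  · intro r hr f x hx
    rw [map_neg, hr f x hx, neg_zero]
  · intro r hr s
    refine ⟨?_, ?_⟩
    · intro f x hx
      rw [auxPhi_mul]
      exact hr _ x hx
    · intro f x hx
      rw [auxPhi_mul]
      exact auxPhi_off hV _ (fun y hy => hr f y hy) x hx s

theorem aux_mem_one (θ : SetPartialAction G X) (x : X) : x ∈ θ.Xt 1 := by
  rw [θ.Xt_one]; trivial

theorem auxE_apply (t : G) (x : X) (hx : x ∈ θ.Xt t) (c : K) :
    ((auxE θ K t x hx c) t : X →₀ K) x = c := by
  simp [auxE, deltaF]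

theorem aux_not_univ {V : Set X} {x : X} (hx : x ∉ V)
    (h : {r : SkewF0 θ K | ∀ f : X → K, ∀ x ∉ V, auxPhi θ K f x r = 0} = Set.univ) : False := by
  have h1 : auxE θ K 1 x (aux_mem_one θ x) 1 ∈
      {r : SkewF0 θ K | ∀ f : X → K, ∀ x ∉ V, auxPhi θ K f x r = 0} := by
    rw [h]; trivial
  have h2 := h1 (fun _ => 1) x hx
  rw [auxE, auxPhi_delta] at h2
  simp at h2

theorem aux_corner (S : FSkewMul θ K) (hfree : θ.Free) (t : G) (x : X) (hx : x ∈ θ.Xt t)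
    (r : SkewF0 θ K) :
    S.mul (S.mul (auxE θ K 1 x (aux_mem_one θ x) 1) r)
      (auxE θ K 1 (θ.h t⁻¹ x) (aux_mem_one θ _) 1) = auxE θ K t x hx ((r t : X →₀ K) x) := by
  refine aux_induction (P := fun r => S.mul (S.mul (auxE θ K 1 x (aux_mem_one θ x) 1) r)
      (auxE θ K 1 (θ.h t⁻¹ x) (aux_mem_one θ _) 1) = auxE θ K t x hx ((r t : X →₀ K) x)) r ?_ ?_ ?_
  · rw [aux_mul_zero, aux_zero_mul]
    ext1 g
    simp [auxE, deltaF]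
    rintro rfl
    rfl
  · intro r1 r2 h1 h2
    rw [S.left_distrib, S.right_distrib, h1, h2]
    unfold auxE deltaF
    rw [← DFinsupp.single_add]
    congr 1
    apply Subtype.ext
    simp
  · intro s b hb
    obtain ⟨c, hc, h1, h2⟩ := aux_mul_delta S 1 s _ b
      (aux_mem_single θ K (aux_mem_one θ x) 1) hb
    obtain ⟨d, hd, h3, h4⟩ := aux_mul_delta S (1 * s) 1 c _ hc
      (aux_mem_single θ K (aux_mem_one θ (θ.h t⁻¹ x)) 1)
    have h5 : S.mul (S.mul (auxE θ K 1 x (aux_mem_one θ x) 1) (deltaF K θ s b hb))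
      (auxE θ K 1 (θ.h t⁻¹ x) (aux_mem_one θ _) 1) = deltaF K θ (1 * s * 1) d hd := by
      unfold auxE
      rw [h1, h3]
    rw [h5]
    have h6 : ∀ p, d p = Finsupp.single x (1 : K) p * b p *
        Finsupp.single (θ.h t⁻¹ x) (1 : K) (θ.h s⁻¹ p) := by
      intro p
      rw [h4, h2]
      simp [θ.h_one]
    by_cases hst : s = t
    · subst hst
      unfold auxE
      apply aux_delta_congr (by simp)
      ext p
      rw [h6]
      by_cases hp : p = x
      · subst hp; simp [deltaF]
      · simp [Finsupp.single_eq_of_ne hp]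
    · have h7 : d = 0 := by
        ext p
        rw [h6]
        by_cases hp : p = x
        · subst hp
          by_cases hps : p ∈ θ.Xt s
          · rw [Finsupp.single_eq_of_ne (a := θ.h t⁻¹ p), mul_zero]; · rfl
            intro heq
            apply hst
            have k1 : θ.h s⁻¹ p ∈ θ.Xt s⁻¹ := θ.h_mem s⁻¹ p (by simpa using hps)
            have k2 : θ.h t⁻¹ p ∈ θ.Xt t⁻¹ := θ.h_mem t⁻¹ p (by simpa using hx)
            have k3 : θ.h s (θ.h s⁻¹ p) = p := by
              simpa using θ.h_left_inv s⁻¹ p (by simpa using hps)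
            have k4 : θ.h t (θ.h t⁻¹ p) = p := by
              simpa using θ.h_left_inv t⁻¹ p (by simpa using hx)
            have k5 : p ∈ θ.Xt s ∩ θ.Xt (s * t⁻¹) := by
              rw [← θ.h_image]
              exact ⟨_, ⟨k1, heq ▸ k2⟩, k3⟩
            have k6 := θ.h_comp t s⁻¹ p (by simpa using hps) (by simpa using k5.2)
            rw [heq, k4] at k6
            have := hfree (t * s⁻¹) p (by simpa using k5.2) k6.symm
            exact (mul_inv_eq_one.mp this).symm
          · have : b p = 0 := hb _ hps
            simp [this]
        · simp [Finsupp.single_eq_of_ne hp]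
      subst h7
      have h8 : ((deltaF K θ s b hb) t : X →₀ K) = 0 := by
        unfold deltaF
        rw [DFinsupp.single_eq_of_ne (Ne.symm hst)]; rfl
      rw [h8]
      ext1 g
      apply Subtype.ext
      unfold auxE
      have e1 : (⟨(0 : X →₀ K), hd⟩ : Dsub θ K (1 * s * 1)) = 0 := rfl
      have e2 : ∀ h, (⟨Finsupp.single x ((0 : X →₀ K) x), h⟩ : Dsub θ K t) = 0 := by
        intro h; apply Subtype.ext; simp
      unfold deltaF
      rw [e1, e2]; simp

theorem aux_backward (S : FSkewMul θ K) (hmin : θ.Minimal) (hfree : θ.Free)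
    (J : Set (SkewF0 θ K)) (hJ : IsSkewIdealF0 K S J) : J = {0} ∨ J = Set.univ := by
  obtain ⟨j0, jadd, jneg, jmul⟩ := hJ
  by_cases hz : ∀ r ∈ J, r = 0
  · left
    ext r
    exact ⟨fun h => hz r h, fun h => by rw [Set.mem_singleton_iff.mp h]; exact j0⟩
  right
  push Not at hz
  obtain ⟨r, hr, hr0⟩ := hz
  obtain ⟨t, x, hrx⟩ : ∃ t x, (r t : X →₀ K) x ≠ 0 := by
    by_contra hcon
    push Not at hcon
    apply hr0
    ext1 t
    apply Subtype.ext
    ext x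
    exact hcon t x
  have hx : x ∈ θ.Xt t := by
    by_contra h
    exact hrx ((r t).2 x h)
  have linv : ∀ (t : G) (x : X), x ∈ θ.Xt t → θ.h t⁻¹ x ∈ θ.Xt t⁻¹ := fun t x hx =>
    θ.h_mem t⁻¹ x (by simpa using hx)
  have hmem1 : auxE θ K t x hx ((r t : X →₀ K) x) ∈ J := by
    rw [← aux_corner S hfree t x hx r]
    exact (jmul _ (jmul _ hr _).2 _).1
  set V : Set X := {x | ∀ c : K, auxE θ K 1 x (aux_mem_one θ x) c ∈ J} with hVdef
  have hxV : x ∈ V := by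
    intro c
    have := (jmul _ hmem1 (auxE θ K t⁻¹ (θ.h t⁻¹ x) (linv t x hx)
      (((r t : X →₀ K) x)⁻¹ * c))).1
    rwa [auxE_mul S hx (linv t x hx) (mul_inv_cancel t) (aux_mem_one θ x) rfl,
      mul_inv_cancel_left₀ hrx] at this
  have hinv : θ.Invariant V := by
    rintro s _ ⟨y, ⟨hy, hys⟩, rfl⟩ c
    have hz : θ.h s y ∈ θ.Xt s := θ.h_mem s y hys
    have hl := θ.h_left_inv s y hys
    have := (jmul _ (jmul _ (hy 1) (auxE θ K s (θ.h s y) hz c)).2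
      (auxE θ K s⁻¹ y hys 1)).1
    rwa [auxE_mul S hz _ (mul_one s) hz hl, auxE_mul S hz hys (mul_inv_cancel s)
      (aux_mem_one θ _) hl, mul_one, mul_one] at this
  have hVu : V = Set.univ := by
    rcases hmin V hinv with h | h
    · rw [h] at hxV; exact hxV.elim
    · exact h
  have hE : ∀ s y (hy : y ∈ θ.Xt s) (c : K), auxE θ K s y hy c ∈ J := by
    intro s y hy c
    have hyV : y ∈ V := by rw [hVu]; trivial
    have := (jmul _ (hyV c) (auxE θ K s y hy 1)).1
    rwa [auxE_mul S _ hy (one_mul s) hy (by simp [θ.h_one]), mul_one] at this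
  rw [Set.eq_univ_iff_forall]
  intro q
  refine aux_induction (P := fun q => q ∈ J) q j0 (fun x y hx hy => jadd x hx y hy) ?_
  intro s a
  induction a using Finsupp.induction with
  | zero =>
    intro ha
    have : deltaF K θ s 0 ha = 0 := by
      unfold deltaF
      have e1 : (⟨(0 : X →₀ K), ha⟩ : Dsub θ K s) = 0 := rfl
      rw [e1]; simp
    rw [this]; exact j0
  | single_add y c f hyf hc ih =>
    intro ha
    have hy : y ∈ θ.Xt s := by
      by_contra h
      have := ha y h
      rw [Finsupp.add_apply, Finsupp.notMem_support_iff.mp hyf] at this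
      simp [hc] at this
    have h1 := aux_mem_single θ K hy c
    have hf : f ∈ Dsub θ K s := by
      have := (Dsub θ K s).sub_mem ha h1
      simpa using this
    have : deltaF K θ s (Finsupp.single y c + f) ha = auxE θ K s y hy c + deltaF K θ s f hf := by
      unfold auxE deltaF
      rw [← DFinsupp.single_add]
      rfl
    rw [this]
    exact jadd _ (hE s y hy c) _ (ih hf)

theorem aux_forward (S : FSkewMul θ K)
    (hS : ∀ J : Set (SkewF0 θ K), IsSkewIdealF0 K S J → J = {0} ∨ J = Set.univ) :
    θ.Minimal ∧ θ.Free := by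
  refine ⟨?_, ?_⟩
  · intro V hV
    rcases hS _ (aux_ideal S hV) with h | h
    · left
      rw [Set.eq_empty_iff_forall_notMem]
      intro x hx
      have h1 : auxE θ K 1 x (aux_mem_one θ x) 1 ∈
          {r : SkewF0 θ K | ∀ f : X → K, ∀ x ∉ V, auxPhi θ K f x r = 0} := by
        intro f y hy
        rw [auxE, auxPhi_delta, Finsupp.single_eq_of_ne, zero_mul]
        rintro rfl
        exact hy hx
      rw [h, Set.mem_singleton_iff] at h1
      have h2 := auxE_apply (K := K) 1 x (aux_mem_one θ x) 1
      rw [h1] at h2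
      simp at h2
    · right
      rw [Set.eq_univ_iff_forall]
      intro x
      by_contra hx
      exact aux_not_univ hx h
  · intro t x hx htx
    by_contra ht
    have hV : θ.Invariant ∅ := by
      rintro s _ ⟨y, ⟨hy, _⟩, _⟩
      exact hy.elim
    have hxt : x ∈ θ.Xt t := by
      have := θ.h_mem t x hx
      rwa [htx] at this
    have hti : θ.h t⁻¹ x = x := by
      have := θ.h_left_inv t x hx
      rwa [htx] at this
    rcases hS _ (aux_ideal S hV) with h | h
    · have h1 : auxE θ K t x hxt 1 - auxE θ K 1 x (aux_mem_one θ x) 1 ∈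
          {r : SkewF0 θ K | ∀ f : X → K, ∀ x ∉ (∅ : Set X), auxPhi θ K f x r = 0} := by
        intro f y _
        rw [map_sub, auxE, auxE, auxPhi_delta, auxPhi_delta]
        by_cases hy : y = x
        · subst hy; simp [hti, θ.h_one]
        · simp [Finsupp.single_eq_of_ne hy]
      rw [h, Set.mem_singleton_iff, sub_eq_zero] at h1
      have h2 := auxE_apply (K := K) t x hxt 1
      rw [h1, auxE, deltaF, DFinsupp.single_eq_of_ne ht] at h2
      simp at h2
    · exact aux_not_univ (Set.notMem_empty x) h

end Helpers

theorem simple_iff_minimal_and_free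
    {G : Type*} [CommGroup G] [DecidableEq G] {X : Type*} [Nonempty X]
    (θ : SetPartialAction G X)
    (K : Type*) [Field K] (S : FSkewMul θ K) :
    (∀ J : Set (SkewF0 θ K), IsSkewIdealF0 K S J → J = {0} ∨ J = Set.univ) ↔
      (θ.Minimal ∧ θ.Free) := by
  exact ⟨fun h => aux_forward S h, fun h J hJ => aux_backward S h.1 h.2 J hJ⟩
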